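/- For a positive integer m and p_1 = 3/2, p_2 = p_3 = 3: there exists a constant C > 0 such that for all positive integers n_1, n_2, n_3 there is a unimodular trilinear form A : ℓ_{3/2}^{n_1} × ℓ_3^{n_2} × ℓ_3^{n_3} → 𝕂 satisfying ‖A‖ ≤ C · (n_1 + n_2 + n_3)^{1/2} · n_2^{1/6} · n_3^{1/6}. -/

import Mathlib

open scoped BigOperators ENNReal

noncomputable section

/-- The `ℓ_p` norm on `𝕂^n`, for `p ∈ [1, ∞]` (sup norm when `p = ∞`). -/
def lpNorm {𝕂 : Type*} [RCLike 𝕂] (p : ℝ≥0∞) {n : ℕ} (x : Fin n → 𝕂) : ℝ :=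
  if p = ∞ then ⨆ j, ‖x j‖ else (∑ j, ‖x j‖ ^ p.toReal) ^ (1 / p.toReal)

/-- The operator norm of an `m`-linear form `A : ℓ_{p 1}^{n 1} × ⋯ × ℓ_{p m}^{n m} → 𝕂`,
i.e. the supremum of `‖A x‖` over all `x` with `‖x k‖_{p k} ≤ 1` for every `k`. -/
def opNorm {𝕂 : Type*} [RCLike 𝕂] {m : ℕ} {n : Fin m → ℕ} (p : Fin m → ℝ≥0∞)
    (A : MultilinearMap 𝕂 (fun k => Fin (n k) → 𝕂) 𝕂) : ℝ :=
  sSup {t | ∃ x : ∀ k, Fin (n k) → 𝕂, (∀ k, lpNorm (p k) (x k) ≤ 1) ∧ t = ‖A x‖}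

/-- A multilinear form is unimodular if all its coefficients `A (e_{j 1}, …, e_{j m})`
have modulus 1. -/
def Unimodular {𝕂 : Type*} [RCLike 𝕂] {m : ℕ} {n : Fin m → ℕ}
    (A : MultilinearMap 𝕂 (fun k => Fin (n k) → 𝕂) 𝕂) : Prop :=
  ∀ j : ∀ k, Fin (n k), ‖A (fun k => Pi.single (j k) 1)‖ = 1

/-- The `m`-linear form `z ↦ ∑_j c j • z^{(1)}_{j 1} ⋯ z^{(m)}_{j m}` determined by the
coefficients `c`. -/
def coeffForm {𝕂 : Type*} [RCLike 𝕂] {m : ℕ} {n : Fin m → ℕ} (c : (∀ k, Fin (n k)) → 𝕂) :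
    MultilinearMap 𝕂 (fun k => Fin (n k) → 𝕂) 𝕂 :=
  ∑ j : ∀ k, Fin (n k), (MultilinearMap.mkPiRing 𝕂 (Fin m) (c j)).compLinearMap
    fun k => LinearMap.proj (j k)

/-- The conjugate exponent `p*` of `p ∈ [1,∞]`, defined by `1/p + 1/p* = 1`. -/
def conjExp (p : ℝ≥0∞) : ℝ≥0∞ := (1 - 1/p)⁻¹

open scoped NNReal

/-!
Give the form independent random signs as coefficients. At a fixed point of the product of the
Euclidean unit balls its real part is a sign sum with square-summable weights, hence subgaussian.
A volumetric net of that product with mesh `1 / (2m)` has at most `(4m + 1) ^ (2 ∑ n_k)` points,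
so some choice of signs is bounded by a multiple of `√(∑ n_k)` on the whole net. Between net points
the form moves by at most half its norm, which is absorbed; rotating one argument by a phase
recovers the modulus from the real part. Finally the `ℓ_p^n` unit ball lies in the Euclidean ball
of radius `n ^ max (1 / 2 - 1 / p) 0`.
-/

section VolumetricCover

open Module MeasureTheory Metric

variable {E : Type*} [NormedAddCommGroup E] [NormedSpace ℝ E] [FiniteDimensional ℝ E] {δ : ℝ≥0}

theorem addHaar_real_ball_of_pos [MeasurableSpace E] [BorelSpace E] (μ : Measure E)
    [μ.IsAddHaarMeasure] (x : E) {r : ℝ} (hr : 0 < r) :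
    μ.real (ball x r) = r ^ finrank ℝ E * μ.real (ball 0 1) := by
  rw [measureReal_def, μ.addHaar_ball_of_pos x hr, ENNReal.toReal_mul,
    ENNReal.toReal_ofReal (by positivity), measureReal_def]

theorem card_le_of_isSeparated_of_subset_closedBall {s : Finset E} (hδ : 0 < δ)
    (hball : (s : Set E) ⊆ closedBall 0 1) (hsep : IsSeparated δ (s : Set E)) :
    (s.card : ℝ) ≤ (1 + 2 / δ) ^ finrank ℝ E := by
  borelize E
  let μ : Measure E := Measure.addHaar
  set r : ℝ := δ / 2
  have hr : 0 < r := by positivity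
  have disjoint_balls : (s : Set E).PairwiseDisjoint fun x ↦ ball x r := fun x hx y hy hxy ↦ by
    refine ball_disjoint_ball ?_
    have hlt : (δ : ℝ≥0∞) < edist x y := hsep hx hy hxy
    rw [edist_nndist, ENNReal.coe_lt_coe, ← NNReal.coe_lt_coe, coe_nndist] at hlt
    exact (add_halves (δ : ℝ)).trans_le hlt.le
  have balls_subset : ⋃ x ∈ s, ball x r ⊆ ball (0 : E) (1 + r) :=
    Set.iUnion₂_subset fun x hx ↦ ball_subset_ball' <| by
      linarith [mem_closedBall.1 (hball hx)]
  have hμ : 0 < μ.real (ball (0 : E) 1) :=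
    ENNReal.toReal_pos (measure_ball_pos _ _ one_pos).ne' measure_ball_lt_top.ne
  have volume_le : s.card * r ^ finrank ℝ E * μ.real (ball (0 : E) 1) ≤
      (1 + r) ^ finrank ℝ E * μ.real (ball (0 : E) 1) :=
    calc s.card * r ^ finrank ℝ E * μ.real (ball (0 : E) 1)
        = ∑ x ∈ s, μ.real (ball x r) := by
          simp [addHaar_real_ball_of_pos _ _ hr, mul_assoc]
      _ = μ.real (⋃ x ∈ s, ball x r) :=
          (measureReal_biUnion_finset disjoint_balls fun _ _ ↦ measurableSet_ball).symm
      _ ≤ μ.real (ball 0 (1 + r)) := measureReal_mono balls_subset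
      _ = (1 + r) ^ finrank ℝ E * μ.real (ball (0 : E) 1) :=
          addHaar_real_ball_of_pos _ _ (by positivity)
  calc (s.card : ℝ) ≤ (1 + r) ^ finrank ℝ E / r ^ finrank ℝ E :=
        (le_div_iff₀ (by positivity)).2 (le_of_mul_le_mul_right volume_le hμ)
    _ = (1 + 2 / δ) ^ finrank ℝ E := by
        rw [← div_pow]
        congr 1
        simp only [r]
        field_simp
        ring

theorem packingNumber_closedBall_ne_top (hδ : 0 < δ) :
    packingNumber δ (closedBall (0 : E) 1) ≠ ⊤ := by
  have : ProperSpace E := FiniteDimensional.proper ℝ E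
  obtain ⟨t, -, ht, hcover⟩ :=
    exists_finite_isCover_of_isCompact (half_pos hδ).ne' (isCompact_closedBall (0 : E) 1)
  refine ne_top_of_le_ne_top (Set.encard_ne_top_iff.2 ht) ?_
  calc packingNumber δ (closedBall (0 : E) 1)
      = packingNumber (2 * (δ / 2)) (closedBall (0 : E) 1) := by rw [mul_div_cancel₀ δ two_ne_zero]
    _ ≤ externalCoveringNumber (δ / 2) (closedBall (0 : E) 1) :=
        packingNumber_two_mul_le_externalCoveringNumber _ _
    _ ≤ t.encard := hcover.externalCoveringNumber_le_encard

variable (E) in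
theorem exists_finset_isCover_closedBall_card_le (hδ : 0 < δ) :
    ∃ s : Finset E, (s : Set E) ⊆ closedBall 0 1 ∧ IsCover δ (closedBall 0 1) (s : Set E) ∧
      (s.card : ℝ) ≤ (1 + 2 / δ) ^ finrank ℝ E := by
  have htop := packingNumber_closedBall_ne_top (E := E) hδ
  have hfin : (maximalSeparatedSet δ (closedBall (0 : E) 1)).Finite :=
    Set.encard_ne_top_iff.1 (encard_maximalSeparatedSet htop ▸ htop)
  lift maximalSeparatedSet δ (closedBall (0 : E) 1) to Finset E using hfin with s hs
  have hball : (s : Set E) ⊆ closedBall 0 1 := hs ▸ maximalSeparatedSet_subset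
  exact ⟨s, hball, hs ▸ isCover_maximalSeparatedSet htop,
    card_le_of_isSeparated_of_subset_closedBall hδ hball (hs ▸ isSeparated_maximalSeparatedSet)⟩

end VolumetricCover

section RandomSigns

open Real

variable {J : Type*} [Fintype J]

theorem sum_exp_sum_signs_mul_le [DecidableEq J] (a : J → ℝ) :
    ∑ ε : J → ℤˣ, exp (∑ j, (ε j : ℤ) * a j) ≤
      Fintype.card (J → ℤˣ) * exp ((∑ j, a j ^ 2) / 2) :=
  calc ∑ ε : J → ℤˣ, exp (∑ j, (ε j : ℤ) * a j)
      = ∏ j, ∑ u : ℤˣ, exp ((u : ℤ) * a j) := by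
        simp only [exp_sum, Finset.prod_univ_sum, Fintype.piFinset_univ]
    _ = ∏ j, 2 * cosh (a j) :=
        Finset.prod_congr rfl fun j _ ↦ by simp [cosh_eq, mul_div_cancel₀]
    _ ≤ ∏ j, 2 * exp (a j ^ 2 / 2) := by
        gcongr with j
        exact cosh_le_exp_half_sq _
    _ = Fintype.card (J → ℤˣ) * exp ((∑ j, a j ^ 2) / 2) := by
        simp [Finset.prod_mul_distrib, ← exp_sum, Finset.sum_div]

theorem exists_signs_forall_sum_mul_le {X : Type*} {s : Finset X} {a : X → J → ℝ} {L : ℝ}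
    (hL : 0 < L) (ha : ∀ x ∈ s, ∑ j, a x j ^ 2 ≤ 1) (hs : (s.card : ℝ) ≤ exp (L ^ 2 / 2)) :
    ∃ ε : J → ℤˣ, ∀ x ∈ s, ∑ j, (ε j : ℤ) * a x j ≤ L := by
  classical
  let Z (ε : J → ℤˣ) (x : X) : ℝ := exp (L * ∑ j, (ε j : ℤ) * a x j)
  have moment_le : ∀ x ∈ s, ∑ ε, Z ε x ≤ Fintype.card (J → ℤˣ) * exp (L ^ 2 / 2) := fun x hx ↦
    calc ∑ ε, Z ε x = ∑ ε : J → ℤˣ, exp (∑ j, (ε j : ℤ) * (L * a x j)) := by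
          simp only [Z, Finset.mul_sum, mul_left_comm]
      _ ≤ Fintype.card (J → ℤˣ) * exp ((∑ j, (L * a x j) ^ 2) / 2) := sum_exp_sum_signs_mul_le _
      _ ≤ Fintype.card (J → ℤˣ) * exp (L ^ 2 / 2) := by
          simp only [mul_pow, ← Finset.mul_sum]
          gcongr
          exact mul_le_of_le_one_right (sq_nonneg L) (ha x hx)
  have total_le : ∑ ε, ∑ x ∈ s, Z ε x ≤ ∑ _ε : J → ℤˣ, exp (L ^ 2) :=
    calc ∑ ε, ∑ x ∈ s, Z ε x = ∑ x ∈ s, ∑ ε, Z ε x := Finset.sum_comm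
      _ ≤ s.card * (Fintype.card (J → ℤˣ) * exp (L ^ 2 / 2)) := by
          simpa using Finset.sum_le_sum moment_le
      _ ≤ exp (L ^ 2 / 2) * (Fintype.card (J → ℤˣ) * exp (L ^ 2 / 2)) := by gcongr
      _ = Fintype.card (J → ℤˣ) * exp (L ^ 2) := by
          rw [mul_left_comm, ← exp_add, add_halves]
      _ = ∑ _ε : J → ℤˣ, exp (L ^ 2) := by simp
  obtain ⟨ε, -, hε⟩ := Finset.exists_le_of_sum_le Finset.univ_nonempty total_le
  refine ⟨ε, fun x hx ↦ le_of_mul_le_mul_left ?_ hL⟩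
  have hZ : Z ε x ≤ exp (L ^ 2) :=
    (Finset.single_le_sum (f := Z ε) (fun _ _ ↦ (exp_pos _).le) hx).trans hε
  simpa only [sq] using exp_le_exp.1 hZ

end RandomSigns

section OpNorm

open Metric

variable {𝕂 ι : Type*} [RCLike 𝕂] [Fintype ι] {E : ι → Type*} [∀ k, NormedAddCommGroup (E k)]
  [∀ k, NormedSpace 𝕂 (E k)]

theorem continuousMultilinearMap_norm_le_of_unit_ball {G : Type*} [NormedAddCommGroup G]
    [NormedSpace 𝕂 G] {f : ContinuousMultilinearMap 𝕂 E G} {C : ℝ} (hC : 0 ≤ C)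
    (hf : ∀ x, ‖x‖ ≤ 1 → ‖f x‖ ≤ C) : ‖f‖ ≤ C := by
  refine ContinuousMultilinearMap.opNorm_le_bound hC fun x ↦ ?_
  let u : ∀ k, E k := fun k ↦ ((‖x k‖⁻¹ : ℝ) : 𝕂) • x k
  have hu : ‖u‖ ≤ 1 := (pi_norm_le_iff_of_nonneg zero_le_one).2 fun k ↦ by
    simpa [u, norm_smul] using inv_mul_le_one
  have hx : x = fun k ↦ ((‖x k‖ : ℝ) : 𝕂) • u k := by
    ext k
    rcases eq_or_ne (x k) 0 with h0 | h0 <;> simp [u, h0, smul_smul]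
  calc ‖f x‖ = (∏ k, ‖x k‖) * ‖f u‖ := by
        conv_lhs => rw [hx, f.map_smul_univ]
        simp [norm_smul]
    _ ≤ C * ∏ k, ‖x k‖ := by
        rw [mul_comm C]
        gcongr
        exact hf u hu

theorem norm_le_of_forall_re_le [Nonempty ι] {f : ContinuousMultilinearMap 𝕂 E 𝕂} {C : ℝ}
    (hf : ∀ x, ‖x‖ ≤ 1 → RCLike.re (f x) ≤ C) {x : ∀ k, E k} (hx : ‖x‖ ≤ 1) : ‖f x‖ ≤ C := by
  classical
  obtain ⟨k₀⟩ := ‹Nonempty ι›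
  obtain ⟨c, hc, hcx⟩ := RCLike.exists_norm_eq_mul_self (f x)
  let y := Function.update x k₀ (c • x k₀)
  have hy : ‖y‖ ≤ 1 := (pi_norm_le_iff_of_nonneg zero_le_one).2 fun k ↦ by
    rcases eq_or_ne k k₀ with rfl | hk
    · simpa [y, norm_smul, hc] using (norm_le_pi_norm x k).trans hx
    · simpa [y, hk] using (norm_le_pi_norm x k).trans hx
  have hfy : f y = ‖f x‖ := by simp [y, f.map_update_smul, hcx]
  simpa [hfy] using hf y hy

theorem norm_le_two_mul_of_isCover_of_forall_re_le [Nonempty ι]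
    {f : ContinuousMultilinearMap 𝕂 E 𝕂} {s : Set (∀ k, E k)} {δ : ℝ≥0} {M : ℝ}
    (hδ : Fintype.card ι * (δ : ℝ) ≤ 1 / 2) (hball : s ⊆ closedBall 0 1)
    (hcover : IsCover δ (closedBall 0 1) s) (hf : ∀ y ∈ s, RCLike.re (f y) ≤ M) :
    ‖f‖ ≤ 2 * M := by
  have re_le : ∀ x, ‖x‖ ≤ 1 → RCLike.re (f x) ≤ M + ‖f‖ / 2 := fun x hx ↦ by
    obtain ⟨y, hys, hxy⟩ := Set.mem_iUnion₂.1 <|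
      hcover.subset_iUnion_closedBall (mem_closedBall_zero_iff.2 hx)
    have hy : ‖y‖ ≤ 1 := mem_closedBall_zero_iff.1 (hball hys)
    have increment_le : ‖f x - f y‖ ≤ ‖f‖ / 2 :=
      calc ‖f x - f y‖
          ≤ ‖f‖ * Fintype.card ι * max ‖x‖ ‖y‖ ^ (Fintype.card ι - 1) * ‖x - y‖ :=
            f.norm_image_sub_le x y
        _ ≤ ‖f‖ * Fintype.card ι * 1 * δ := by
            gcongr
            · exact pow_le_one₀ (by positivity) (max_le hx hy)
            · exact mem_closedBall_iff_norm.1 hxy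
        _ = ‖f‖ * (Fintype.card ι * δ) := by ring
        _ ≤ ‖f‖ / 2 := by
            rw [div_eq_mul_one_div]
            gcongr
    calc RCLike.re (f x) = RCLike.re (f y) + RCLike.re (f x - f y) := by simp
      _ ≤ M + ‖f‖ / 2 := add_le_add (hf y hys) ((RCLike.re_le_norm _).trans increment_le)
  have hnonneg : 0 ≤ M + ‖f‖ / 2 :=
    (norm_nonneg (f 0)).trans (norm_le_of_forall_re_le re_le (by simp))
  linarith [continuousMultilinearMap_norm_le_of_unit_ball hnonneg fun x hx ↦
    norm_le_of_forall_re_le re_le hx]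

end OpNorm

section LpComparison

variable {ι : Type*} [Fintype ι] {p q : ℝ}

theorem sum_rpow_le_one_of_exponent_le {f : ι → ℝ} (hf : ∀ i, 0 ≤ f i) (hp : 0 < p) (hpq : p ≤ q)
    (hsum : ∑ i, f i ^ p ≤ 1) : ∑ i, f i ^ q ≤ 1 := by
  refine (Finset.sum_le_sum fun i _ ↦ ?_).trans hsum
  have hfp : f i ^ p ≤ 1 := (Finset.single_le_sum (f := fun i ↦ f i ^ p)
    (fun i _ ↦ Real.rpow_nonneg (hf i) p) (Finset.mem_univ i)).trans hsum
  have hfi : f i ≤ 1 := (Real.rpow_le_rpow_iff (hf i) zero_le_one hp).1 <| by rwa [Real.one_rpow]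
  exact Real.rpow_le_rpow_of_exponent_ge' (hf i) hfi hp.le hpq

theorem sum_rpow_le_card_rpow_of_exponent_le {f : ι → ℝ} (hf : ∀ i, 0 ≤ f i) (hq : 0 < q)
    (hqp : q ≤ p) (hsum : ∑ i, f i ^ p ≤ 1) :
    ∑ i, f i ^ q ≤ (Fintype.card ι : ℝ) ^ (1 - q / p) := by
  have hp : 0 < p := hq.trans_le hqp
  have hpow : (∑ i, f i ^ q) ^ (p / q) ≤ (Fintype.card ι : ℝ) ^ (p / q - 1) :=
    calc (∑ i, f i ^ q) ^ (p / q)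
        ≤ (Fintype.card ι : ℝ) ^ (p / q - 1) * ∑ i, (f i ^ q) ^ (p / q) :=
          Real.rpow_sum_le_const_mul_sum_rpow_of_nonneg _ ((one_le_div hq).2 hqp)
            fun i _ ↦ Real.rpow_nonneg (hf i) q
      _ = (Fintype.card ι : ℝ) ^ (p / q - 1) * ∑ i, f i ^ p := by
          simp only [← Real.rpow_mul (hf _), mul_div_cancel₀ p hq.ne']
      _ ≤ (Fintype.card ι : ℝ) ^ (p / q - 1) := mul_le_of_le_one_right (by positivity) hsum
  have hnonneg : 0 ≤ ∑ i, f i ^ q := Finset.sum_nonneg fun i _ ↦ Real.rpow_nonneg (hf i) q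
  calc ∑ i, f i ^ q = ((∑ i, f i ^ q) ^ (p / q)) ^ (q / p) := by
        rw [← Real.rpow_mul hnonneg, div_mul_div_cancel₀ hq.ne', div_self hp.ne', Real.rpow_one]
    _ ≤ ((Fintype.card ι : ℝ) ^ (p / q - 1)) ^ (q / p) := by gcongr
    _ = (Fintype.card ι : ℝ) ^ (1 - q / p) := by
        rw [← Real.rpow_mul (Nat.cast_nonneg _)]
        congr 1
        field_simp

variable {𝕂 : Type*} [RCLike 𝕂] {n : ℕ}

theorem sum_rpow_le_one_of_lpNorm_le_one {p : ℝ≥0∞} (hp₀ : p ≠ 0) (hp : p ≠ ∞) {x : Fin n → 𝕂}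
    (hx : lpNorm p x ≤ 1) : ∑ j, ‖x j‖ ^ p.toReal ≤ 1 := by
  rw [lpNorm, if_neg hp] at hx
  exact (Real.rpow_le_rpow_iff (by positivity) zero_le_one
    (one_div_pos.2 (ENNReal.toReal_pos hp₀ hp))).1 (by rwa [Real.one_rpow])

theorem norm_le_one_of_lpNorm_top_le_one {x : Fin n → 𝕂} (hx : lpNorm ∞ x ≤ 1) (j : Fin n) :
    ‖x j‖ ≤ 1 := by
  rw [lpNorm, if_pos rfl] at hx
  exact (le_ciSup (Set.finite_range fun j ↦ ‖x j‖).bddAbove j).trans hx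

theorem sum_norm_sq_le_of_lpNorm_le_one {p : ℝ≥0∞} (hp₀ : p ≠ 0) {x : Fin n → 𝕂}
    (hx : lpNorm p x ≤ 1) : ∑ j, ‖x j‖ ^ 2 ≤ ((n : ℝ) ^ max (1 / 2 - p⁻¹.toReal) 0) ^ 2 := by
  simp only [← Real.rpow_two, ← Real.rpow_mul (Nat.cast_nonneg n)]
  rcases eq_or_ne p ∞ with rfl | hp
  · have hsum : ∑ j, ‖x j‖ ^ (2 : ℝ) ≤ ∑ _j : Fin n, (1 : ℝ) := Finset.sum_le_sum fun j _ ↦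
      Real.rpow_le_one (norm_nonneg _) (norm_le_one_of_lpNorm_top_le_one hx j) zero_le_two
    simpa using hsum
  have hsum := sum_rpow_le_one_of_lpNorm_le_one hp₀ hp hx
  have hpos : 0 < p.toReal := ENNReal.toReal_pos hp₀ hp
  rw [ENNReal.toReal_inv]
  rcases le_total p.toReal 2 with hle | hle
  · have hexp : 1 / 2 - p.toReal⁻¹ ≤ 0 := by
      rw [sub_nonpos, one_div]
      gcongr
    rw [max_eq_right hexp, zero_mul, Real.rpow_zero]
    exact sum_rpow_le_one_of_exponent_le (fun j ↦ norm_nonneg (x j)) hpos hle hsum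
  · have hexp : 0 ≤ 1 / 2 - p.toReal⁻¹ := by
      rw [sub_nonneg, one_div]
      gcongr
    convert sum_rpow_le_card_rpow_of_exponent_le (fun j ↦ norm_nonneg (x j)) two_pos hle hsum
      using 2
    · simp
    · rw [max_eq_left hexp]
      ring

theorem norm_toLp_two_le_of_lpNorm_le_one {p : ℝ≥0∞} (hp₀ : p ≠ 0) {x : Fin n → 𝕂}
    (hx : lpNorm p x ≤ 1) :
    ‖WithLp.toLp 2 x‖ ≤ (n : ℝ) ^ max (1 / 2 - p⁻¹.toReal) 0 := by
  rw [EuclideanSpace.norm_eq]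
  exact Real.sqrt_le_iff.2 ⟨by positivity, sum_norm_sq_le_of_lpNorm_le_one hp₀ hx⟩

end LpComparison

section CoeffForm

variable {𝕂 : Type*} [RCLike 𝕂] {m : ℕ} {n : Fin m → ℕ}

theorem coeffForm_apply (c : (∀ k, Fin (n k)) → 𝕂) (x : ∀ k, Fin (n k) → 𝕂) :
    coeffForm c x = ∑ j, c j * ∏ k, x k (j k) := by
  simp [coeffForm, mul_comm]

theorem unimodular_coeffForm {c : (∀ k, Fin (n k)) → 𝕂} (hc : ∀ j, ‖c j‖ = 1) :
    Unimodular (coeffForm c) := fun j ↦ by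
  rw [coeffForm_apply, Finset.sum_eq_single j]
  · simp [hc]
  · intro i _ hij
    obtain ⟨k, hk⟩ := Function.ne_iff.1 hij
    rw [Finset.prod_eq_zero (Finset.mem_univ k) (Pi.single_eq_of_ne hk 1), mul_zero]
  · simp

/-- The form `coeffForm c` viewed as a continuous multilinear form on a product of Euclidean
spaces, so that its norm is the operator norm on `ℓ_2^{n 1} × ⋯ × ℓ_2^{n m}`. -/
def euclideanCoeffForm (c : (∀ k, Fin (n k)) → 𝕂) :
    ContinuousMultilinearMap 𝕂 (fun k ↦ EuclideanSpace 𝕂 (Fin (n k))) 𝕂 where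
  toMultilinearMap :=
    (coeffForm c).compLinearMap fun k ↦ (WithLp.linearEquiv 2 𝕂 (Fin (n k) → 𝕂)).toLinearMap
  cont := by
    refine (show Continuous fun x : ∀ k, EuclideanSpace 𝕂 (Fin (n k)) ↦
      ∑ j, c j * ∏ k, x k (j k) by fun_prop).congr fun x ↦ ?_
    exact (coeffForm_apply c fun k ↦ x k).symm

theorem euclideanCoeffForm_apply (c : (∀ k, Fin (n k)) → 𝕂)
    (x : ∀ k, EuclideanSpace 𝕂 (Fin (n k))) :
    euclideanCoeffForm c x = ∑ j, c j * ∏ k, x k (j k) :=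
  coeffForm_apply c fun k ↦ x k

theorem opNorm_coeffForm_le {p : Fin m → ℝ≥0∞} (hp : ∀ k, p k ≠ 0) (c : (∀ k, Fin (n k)) → 𝕂) :
    opNorm p (coeffForm c) ≤
      ‖euclideanCoeffForm c‖ * ∏ k, (n k : ℝ) ^ max (1 / 2 - (p k)⁻¹.toReal) 0 := by
  refine Real.sSup_le ?_ (by positivity)
  rintro _ ⟨x, hx, rfl⟩
  exact (euclideanCoeffForm c).le_opNorm_mul_prod_of_le (m := fun k ↦ WithLp.toLp 2 (x k))
    fun k ↦ norm_toLp_two_le_of_lpNorm_le_one (hp k) (hx k)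

theorem sum_norm_prod_sq_eq (x : ∀ k, EuclideanSpace 𝕂 (Fin (n k))) :
    ∑ j : ∀ k, Fin (n k), ‖∏ k, x k (j k)‖ ^ 2 = ∏ k, ‖x k‖ ^ 2 := by
  simp only [EuclideanSpace.norm_sq_eq, Finset.prod_univ_sum, Fintype.piFinset_univ, norm_prod,
    Finset.prod_pow]

theorem sum_re_prod_sq_le_one {x : ∀ k, EuclideanSpace 𝕂 (Fin (n k))} (hx : ‖x‖ ≤ 1) :
    ∑ j : ∀ k, Fin (n k), RCLike.re (∏ k, x k (j k)) ^ 2 ≤ 1 :=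
  calc ∑ j : ∀ k, Fin (n k), RCLike.re (∏ k, x k (j k)) ^ 2
      ≤ ∑ j : ∀ k, Fin (n k), ‖∏ k, x k (j k)‖ ^ 2 :=
        Finset.sum_le_sum fun j _ ↦ sq_le_sq.2 <| by
          simpa only [abs_norm] using RCLike.abs_re_le_norm (∏ k, x k (j k))
    _ = ∏ k, ‖x k‖ ^ 2 := sum_norm_prod_sq_eq x
    _ ≤ 1 := Finset.prod_le_one (fun k _ ↦ by positivity) fun k _ ↦
        pow_le_one₀ (norm_nonneg _) ((norm_le_pi_norm x k).trans hx)

theorem re_euclideanCoeffForm_intCast (c : (∀ k, Fin (n k)) → ℤ)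
    (x : ∀ k, EuclideanSpace 𝕂 (Fin (n k))) :
    RCLike.re (euclideanCoeffForm (fun j ↦ (c j : 𝕂)) x) =
      ∑ j, c j * RCLike.re (∏ k, x k (j k)) := by
  simp only [euclideanCoeffForm_apply, map_sum, ← RCLike.ofReal_intCast (K := 𝕂),
    RCLike.re_ofReal_mul]

theorem finrank_real_pi_euclideanSpace_le :
    Module.finrank ℝ (∀ k, EuclideanSpace 𝕂 (Fin (n k))) ≤ 2 * ∑ k, n k :=
  calc Module.finrank ℝ (∀ k, EuclideanSpace 𝕂 (Fin (n k)))
      = Module.finrank ℝ 𝕂 * Module.finrank 𝕂 (∀ k, EuclideanSpace 𝕂 (Fin (n k))) :=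
        (Module.finrank_mul_finrank ℝ 𝕂 _).symm
    _ ≤ 2 * ∑ k, n k := by
        simpa [Module.finrank_pi_fintype] using
          Nat.mul_le_mul_right (∑ k, n k) (RCLike.finrank_le_two 𝕂)

theorem exists_finset_isCover_pi_euclideanSpace_card_le (hm : 0 < m) :
    ∃ s : Finset (∀ k, EuclideanSpace 𝕂 (Fin (n k))),
      (s : Set (∀ k, EuclideanSpace 𝕂 (Fin (n k)))) ⊆ Metric.closedBall 0 1 ∧
      Metric.IsCover (2 * m : ℝ≥0)⁻¹ (Metric.closedBall 0 1)
        (s : Set (∀ k, EuclideanSpace 𝕂 (Fin (n k)))) ∧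
      (s.card : ℝ) ≤ (4 * m + 1) ^ (2 * ∑ k, n k) := by
  obtain ⟨s, hball, hcover, hcard⟩ := exists_finset_isCover_closedBall_card_le
    (∀ k, EuclideanSpace 𝕂 (Fin (n k))) (show 0 < (2 * m : ℝ≥0)⁻¹ by positivity)
  have hbase : (1 + 2 / ((2 * m : ℝ≥0)⁻¹ : ℝ≥0) : ℝ) = 4 * m + 1 := by
    push_cast
    rw [div_inv_eq_mul]
    ring
  rw [hbase] at hcard
  refine ⟨s, hball, hcover, hcard.trans ?_⟩
  gcongr
  · simp
  · exact finrank_real_pi_euclideanSpace_le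

theorem exists_signs_norm_euclideanCoeffForm_le (hn : 0 < ∑ k, n k) :
    ∃ ε : (∀ k, Fin (n k)) → ℤˣ, ‖euclideanCoeffForm fun j ↦ ((ε j : ℤ) : 𝕂)‖ ≤
      4 * √(Real.log (4 * m + 1)) * √(∑ k, (n k : ℝ)) := by
  have hm : 0 < m := Nat.pos_of_ne_zero <| by rintro rfl; simp at hn
  have : Nonempty (Fin m) := ⟨⟨0, hm⟩⟩
  have hN : (0 : ℝ) < ∑ k, (n k : ℝ) := mod_cast hn
  have hlog : 0 < Real.log (4 * m + 1) := Real.log_pos (by simpa using hm)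
  obtain ⟨s, hball, hcover, hcard⟩ :=
    exists_finset_isCover_pi_euclideanSpace_card_le (𝕂 := 𝕂) (n := n) hm
  set L := 2 * √(Real.log (4 * m + 1)) * √(∑ k, (n k : ℝ)) with hL
  have card_le_exp : (s.card : ℝ) ≤ Real.exp (L ^ 2 / 2) := hcard.trans_eq <| by
    rw [hL, mul_pow, mul_pow, Real.sq_sqrt hlog.le, Real.sq_sqrt hN.le, ← Real.rpow_natCast,
      Real.rpow_def_of_pos (by positivity)]
    push_cast
    ring_nf
  obtain ⟨ε, hε⟩ := exists_signs_forall_sum_mul_le (by positivity)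
    (fun x hx ↦ sum_re_prod_sq_le_one (mem_closedBall_zero_iff.1 (hball hx))) card_le_exp
  have mesh : Fintype.card (Fin m) * ((2 * m : ℝ≥0)⁻¹ : ℝ≥0) ≤ (1 / 2 : ℝ) := by
    rw [Fintype.card_fin]
    push_cast
    exact le_of_eq (by field_simp)
  refine ⟨ε, ?_⟩
  calc ‖euclideanCoeffForm fun j ↦ ((ε j : ℤ) : 𝕂)‖ ≤ 2 * L :=
        norm_le_two_mul_of_isCover_of_forall_re_le mesh hball hcover
          fun x hx ↦ (re_euclideanCoeffForm_intCast _ x).trans_le (hε x hx)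
    _ = 4 * √(Real.log (4 * m + 1)) * √(∑ k, (n k : ℝ)) := by ring

end CoeffForm

theorem trilinear_upper_bound_example_general {𝕂 : Type*} [RCLike 𝕂] {m : ℕ} (n : Fin m → ℕ)
    (hn : 0 < ∑ k, n k) {p : Fin m → ℝ≥0∞} (hp : ∀ k, p k ≠ 0) :
    ∃ A : MultilinearMap 𝕂 (fun k ↦ Fin (n k) → 𝕂) 𝕂, Unimodular A ∧
      opNorm p A ≤ 4 * √(Real.log (4 * m + 1)) * (∑ k, (n k : ℝ)) ^ ((1 : ℝ) / 2) *
        ∏ k, (n k : ℝ) ^ max (1 / 2 - (p k)⁻¹.toReal) 0 := by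
  obtain ⟨ε, hε⟩ := exists_signs_norm_euclideanCoeffForm_le (𝕂 := 𝕂) hn
  refine ⟨coeffForm fun j ↦ ((ε j : ℤ) : 𝕂), unimodular_coeffForm fun j ↦ ?_, ?_⟩
  · rcases Int.units_eq_one_or (ε j) with h | h <;> simp [h]
  · rw [← Real.sqrt_eq_rpow]
    exact (opNorm_coeffForm_le hp _).trans (by gcongr)

/-- For `p₁ = 3/2`, `p₂ = p₃ = 3`: there is `C > 0` such that for all positive integers
`n₁, n₂, n₃` there is a unimodular trilinear form
`A : ℓ_{3/2}^{n₁} × ℓ_3^{n₂} × ℓ_3^{n₃} → 𝕂` with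
`‖A‖ ≤ C (n₁ + n₂ + n₃)^{1/2} n₂^{1/6} n₃^{1/6}`. -/
theorem trilinear_upper_bound_example {𝕂 : Type*} [RCLike 𝕂] (m : ℕ) (hm : 0 < m) :
    ∃ C : ℝ, 0 < C ∧
      ∀ n₁ n₂ n₃ : ℕ, 0 < n₁ → 0 < n₂ → 0 < n₃ →
        ∃ A : MultilinearMap 𝕂 (fun k : Fin 3 => Fin (![n₁, n₂, n₃] k) → 𝕂) 𝕂,
          Unimodular A ∧
            opNorm ![3 / 2, 3, 3] A ≤
              C * ((n₁ : ℝ) + (n₂ : ℝ) + (n₃ : ℝ)) ^ ((1 : ℝ) / 2)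
                * (n₂ : ℝ) ^ ((1 : ℝ) / 6) * (n₃ : ℝ) ^ ((1 : ℝ) / 6) := by
  refine ⟨4 * √(Real.log 13), by positivity, fun n₁ n₂ n₃ h₁ _ _ ↦ ?_⟩
  obtain ⟨A, hA, hle⟩ := trilinear_upper_bound_example_general (𝕂 := 𝕂) (m := 3) ![n₁, n₂, n₃]
    (p := ![3 / 2, 3, 3]) (by simp [Fin.sum_univ_three, h₁]) (by simp [Fin.forall_fin_succ])
  refine ⟨A, hA, hle.trans_eq ?_⟩
  have hmax₁ : max (1 / 2 - ((3 / 2 : ℝ≥0∞)⁻¹).toReal) 0 = 0 := by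
    norm_num [ENNReal.toReal_inv, ENNReal.toReal_div]
  have hmax₂ : max (1 / 2 - ((3 : ℝ≥0∞)⁻¹).toReal) 0 = 1 / 6 := by norm_num [ENNReal.toReal_inv]
  have hlog : (4 * (3 : ℕ) + 1 : ℝ) = 13 := by norm_num
  simp only [Fin.sum_univ_three, Fin.prod_univ_three, Matrix.cons_val, hmax₁, hmax₂, hlog,
    Real.rpow_zero, one_mul, mul_assoc]
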